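/- Let A be a dg category. Then Twist(A) has twisted complexes: given an object {A|p} of Twist(A) and a degree-1 endomorphism {p|α|p}: {A|p} → {A|p} satisfying the Maurer–Cartan equation in Twist(A), the endomorphism p + α of A satisfies the Maurer–Cartan equation in A, and the object {A|p+α} together with the degree-0 isomorphism {p|id_A|p+α}: {A|p+α} → {A|p} is a twisted complex of ({A|p}, {p|α|p}) in Twist(A); in particular d({p|id_A|p+α}) = (−{p|α|p+α}) = (−{p|α|p})∘{p|id_A|p+α}. -/

import Mathlib

/-! Core formal framework: dg categories over a field `k`, given by explicit data
(`DGData`) together with the dg-category axioms (`IsDGCat`), following the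
conventions of the paper: hom-sets are `ℤ`-graded `k`-vector spaces, `d` has
degree `1`, composition is associative of degree `0`, identities are closed of
degree `0`. -/

namespace P

universe u v

structure DGData (k : Type) [Field k] where
  Obj : Type u
  Hom : Obj → Obj → ℤ → Type v
  homAdd : ∀ A B i, AddCommGroup (Hom A B i)
  homMod : ∀ A B i, Module k (Hom A B i)
  d : ∀ {A B : Obj} {i : ℤ}, Hom A B i → Hom A B (i + 1)
  comp : ∀ {A B C : Obj} {i j : ℤ}, Hom B C j → Hom A B i → Hom A C (j + i)
  id : ∀ A : Obj, Hom A A 0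

attribute [instance] DGData.homAdd DGData.homMod

variable {k : Type} [Field k]

/-- Transport of a morphism along an equality of degrees. -/
def DGData.cast (D : DGData k) {A B : D.Obj} {i i' : ℤ} (h : i = i')
    (x : D.Hom A B i) : D.Hom A B i' := h ▸ x

/-- Transport of a morphism along equalities of its source, target and degree. -/
def DGData.hcast (D : DGData k) {A A' B B' : D.Obj} {i i' : ℤ}
    (hA : A = A') (hB : B = B') (hi : i = i') (x : D.Hom A B i) :
    D.Hom A' B' i' := by
  subst hA; subst hB; subst hi; exact x

/-- The axioms making the data `D` a dg category: hom-sets are complexes of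
`k`-vector spaces, composition is `k`-bilinear, the graded Leibniz rule holds,
composition is associative, and identities are closed two-sided units. -/
structure IsDGCat (D : DGData k) : Prop where
  d_add : ∀ {A B : D.Obj} {g : ℤ} (x y : D.Hom A B g), D.d (x + y) = D.d x + D.d y
  d_smul : ∀ {A B : D.Obj} {g : ℤ} (c : k) (x : D.Hom A B g), D.d (c • x) = c • D.d x
  comp_add_left : ∀ {A B C : D.Obj} {g h : ℤ} (β₁ β₂ : D.Hom B C h) (α : D.Hom A B g),
      D.comp (β₁ + β₂) α = D.comp β₁ α + D.comp β₂ α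
  comp_add_right : ∀ {A B C : D.Obj} {g h : ℤ} (β : D.Hom B C h) (α₁ α₂ : D.Hom A B g),
      D.comp β (α₁ + α₂) = D.comp β α₁ + D.comp β α₂
  comp_smul_left : ∀ {A B C : D.Obj} {g h : ℤ} (c : k) (β : D.Hom B C h) (α : D.Hom A B g),
      D.comp (c • β) α = c • D.comp β α
  comp_smul_right : ∀ {A B C : D.Obj} {g h : ℤ} (c : k) (β : D.Hom B C h) (α : D.Hom A B g),
      D.comp β (c • α) = c • D.comp β α
  d_d : ∀ {A B : D.Obj} {g : ℤ} (x : D.Hom A B g), D.d (D.d x) = 0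
  leibniz : ∀ {A B C : D.Obj} {g h : ℤ} (β : D.Hom B C h) (α : D.Hom A B g),
      D.d (D.comp β α) =
        D.cast (by ring) (D.comp (D.d β) α) +
          ((-1 : k) ^ h) • D.cast (by ring) (D.comp β (D.d α))
  assoc : ∀ {A B C E : D.Obj} {g h l : ℤ} (γ : D.Hom C E l) (β : D.Hom B C h)
      (α : D.Hom A B g),
      D.comp γ (D.comp β α) = D.cast (by ring) (D.comp (D.comp γ β) α)
  id_comp : ∀ {A B : D.Obj} {g : ℤ} (α : D.Hom A B g),
      D.cast (zero_add g) (D.comp (D.id B) α) = α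
  comp_id : ∀ {A B : D.Obj} {g : ℤ} (α : D.Hom A B g),
      D.cast (add_zero g) (D.comp α (D.id A)) = α
  d_id : ∀ A : D.Obj, D.d (D.id A) = 0

/-- A morphism is closed if its differential vanishes. -/
def DGData.IsClosed (D : DGData k) {A B : D.Obj} {g : ℤ} (x : D.Hom A B g) : Prop :=
  D.d x = 0

/-- The Maurer-Cartan equation `d(p) + p ∘ p = 0` for a degree `1` endomorphism. -/
def DGData.MC (D : DGData k) {A : D.Obj} (p : D.Hom A A 1) : Prop :=
  D.d p + D.comp p p = 0

/-- A chain of `n` (in fact, infinitely many; only the first `n` are ever used)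
composable morphisms `α m : A m ⟶ A (m+1)`, where `α m` is recorded together
with its *shifted* degree `g m`, i.e. `α m` lies in degree `g m + 1`.  This
encodes an element `s α_n ⊗ ⋯ ⊗ s α_1` of `S(A n, A (n+1)) ⊗ ⋯ ⊗ S(A 0, A 1)`
(the chain is indexed so that index `0` is the first morphism `α^1`). -/
abbrev DGData.Chain (D : DGData k) (A : ℕ → D.Obj) (g : ℕ → ℤ) : Type _ :=
  ∀ m : ℕ, D.Hom (A m) (A (m + 1)) (g m + 1)

/-- Partial sums of the (shifted) degrees of a chain. -/
def psum (g : ℕ → ℤ) (n : ℕ) : ℤ := ∑ m ∈ Finset.range n, g m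

lemma psum_succ (g : ℕ → ℤ) (r : ℕ) : psum g (r + 1) = psum g r + g r :=
  Finset.sum_range_succ g r

lemma psum_one (g : ℕ → ℤ) : psum g 1 = g 0 := by simp [psum]

lemma psum_two (g : ℕ → ℤ) : psum g 2 = g 0 + g 1 := by
  simp [psum, Finset.sum_range_succ]

lemma psum_const_zero (n : ℕ) : psum (fun _ => (0 : ℤ)) n = 0 := by simp [psum]

lemma psum_shift (g : ℕ → ℤ) (t : ℕ) :
    ∀ r, psum (fun m => g (t + m)) r = psum g (t + r) - psum g t := by
  intro r
  induction r with
  | zero => simp [psum]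
  | succ r ih => rw [psum_succ, ih, Nat.add_succ, psum_succ]; ring

/-- Update of a chain in one slot (keeping the degree). -/
def DGData.upd0 (D : DGData k) {A : ℕ → D.Obj} {g : ℕ → ℤ} (α : D.Chain A g)
    (m : ℕ) (v : D.Hom (A m) (A (m + 1)) (g m + 1)) : D.Chain A g := fun t =>
  if h : t = m then (by subst h; exact v) else α t

/-- Objects of the chain obtained by replacing the `j` consecutive entries
starting at position `l` by a single entry. -/
def splObj {τ : Type u} (A : ℕ → τ) (l j : ℕ) : ℕ → τ := fun t =>
  if t ≤ l then A t else A (t + j - 1)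

/-- Degrees of the spliced chain; the new entry at position `l` has (shifted)
degree `w`. -/
def splG (g : ℕ → ℤ) (l j : ℕ) (w : ℤ) : ℕ → ℤ := fun t =>
  if t < l then g t else if t = l then w else g (t + j - 1)

lemma splObj_le {τ : Type u} (A : ℕ → τ) {l j t : ℕ} (h : t ≤ l) :
    splObj A l j t = A t := if_pos h

lemma splObj_gt {τ : Type u} (A : ℕ → τ) {l j t : ℕ} (h : ¬ t ≤ l) :
    splObj A l j t = A (t + j - 1) := if_neg h

lemma splObj_zero {τ : Type u} (A : ℕ → τ) (l j : ℕ) : splObj A l j 0 = A 0 :=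
  splObj_le A (Nat.zero_le l)

lemma splObj_last {τ : Type u} (A : ℕ → τ) {l j n : ℕ} (h1 : 1 ≤ j)
    (h2 : l + j ≤ n) : splObj A l j (n - j + 1) = A n := by
  unfold splObj
  rw [if_neg (by omega)]
  exact congrArg A (by omega)

lemma splG_lt {g : ℕ → ℤ} {l j : ℕ} {w : ℤ} {t : ℕ} (h : t < l) :
    splG g l j w t = g t := by unfold splG; rw [if_pos h]

lemma splG_eq {g : ℕ → ℤ} {l j : ℕ} {w : ℤ} {t : ℕ} (h : t = l) :
    splG g l j w t = w := by unfold splG; rw [if_neg (by omega), if_pos h]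

lemma splG_gt {g : ℕ → ℤ} {l j : ℕ} {w : ℤ} {t : ℕ} (h1 : ¬ t < l) (h2 : ¬ t = l) :
    splG g l j w t = g (t + j - 1) := by unfold splG; rw [if_neg h1, if_neg h2]

/-- The sum of the degrees of the spliced chain, when the inserted entry has
the degree of a degree `1` operation applied to the block it replaces. -/
lemma psum_splG (g : ℕ → ℤ) {l j n : ℕ} (h1 : 1 ≤ j) (h2 : l + j ≤ n) :
    psum (splG g l j (psum (fun m => g (l + m)) j + 1)) (n - j + 1) =
      psum g n + 1 := by
  have hln : l + 1 ≤ n - j + 1 := by omega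
  rw [psum, ← Finset.sum_range_add_sum_Ico _ hln]
  have e1 : (∑ t ∈ Finset.range (l + 1),
      splG g l j (psum (fun m => g (l + m)) j + 1) t)
      = psum g l + (psum (fun m => g (l + m)) j + 1) := by
    rw [Finset.sum_range_succ]
    congr 1
    · exact Finset.sum_congr rfl fun t ht => splG_lt (Finset.mem_range.mp ht)
    · exact splG_eq rfl
  have e2 : (∑ t ∈ Finset.Ico (l + 1) (n - j + 1),
      splG g l j (psum (fun m => g (l + m)) j + 1) t)
      = ∑ u ∈ Finset.Ico (l + j) n, g u := by
    rw [Finset.sum_Ico_eq_sum_range, Finset.sum_Ico_eq_sum_range]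
    have hc : n - j + 1 - (l + 1) = n - (l + j) := by omega
    rw [hc]
    refine Finset.sum_congr rfl fun i hi => ?_
    rw [splG_gt (by omega) (by omega)]
    congr 1
    omega
  have e3 : (∑ u ∈ Finset.Ico (l + j) n, g u) = psum g n - psum g (l + j) := by
    rw [psum, psum, Finset.sum_Ico_eq_sub _ (by omega : l + j ≤ n)]
  rw [e1, e2, e3, psum_shift g l j]
  ring

/-- The spliced chain: replace the `j` entries starting at position `l` by the
single entry `v`. -/
def DGData.splChain (D : DGData k) {A : ℕ → D.Obj} {g : ℕ → ℤ} (α : D.Chain A g)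
    (l j : ℕ) (hj : 1 ≤ j) {w : ℤ} (v : D.Hom (A l) (A (l + j)) (w + 1)) :
    D.Chain (splObj A l j) (splG g l j w) := fun t =>
  if h1 : t < l then
    D.hcast (splObj_le A (le_of_lt h1)).symm (splObj_le A (by omega)).symm
      (by rw [splG_lt h1]) (α t)
  else if h2 : t = l then
    D.hcast (by rw [show t = l from h2]; exact (splObj_le A le_rfl).symm)
      (by rw [show t = l from h2, splObj_gt A (show ¬ l + 1 ≤ l by omega)]
          exact congrArg A (by omega))
      (by rw [splG_eq h2]) v
  else
    D.hcast (splObj_gt A (by omega)).symm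
      (by rw [splObj_gt A (show ¬ t + 1 ≤ l by omega)]; exact congrArg A (by omega))
      (by rw [splG_gt h1 h2]) (α (t + j - 1))

end P

namespace P

variable {k : Type} [Field k]

/-- Data of chosen twisted complexes: for every object `A` and Maurer-Cartan
degree `1` endomorphism `p` of `A`, an object `{A|p}` with a degree `0`
morphism `ι : {A|p} → A` and a candidate inverse. -/
structure TwistedData (D : DGData k) where
  obj : ∀ (A : D.Obj) (p : D.Hom A A 1), D.MC p → D.Obj
  ι : ∀ (A : D.Obj) (p : D.Hom A A 1) (hp : D.MC p), D.Hom (obj A p hp) A 0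
  ιInv : ∀ (A : D.Obj) (p : D.Hom A A 1) (hp : D.MC p), D.Hom A (obj A p hp) 0

/-- The axioms: `ι` is a degree `0` isomorphism (not necessarily closed)
satisfying `d(ι) + p ∘ ι = 0`. -/
structure IsTwistedData (D : DGData k) (T : TwistedData D) : Prop where
  ι_ιInv : ∀ A p hp, D.cast (by ring) (D.comp (T.ι A p hp) (T.ιInv A p hp)) = D.id A
  ιInv_ι : ∀ A p hp, D.cast (by ring) (D.comp (T.ιInv A p hp) (T.ι A p hp))
      = D.id (T.obj A p hp)
  dι : ∀ A p hp, D.d (T.ι A p hp) + D.cast (by ring) (D.comp p (T.ι A p hp)) = 0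

/-- A dg category `has twisted complexes` if it is equipped with such data
satisfying the axioms. -/
structure HasTwistedComplexes (D : DGData k) where
  T : TwistedData D
  isT : IsTwistedData D T

/-- The morphism `{q|α|p} := ι_q⁻¹ ∘ α ∘ ι_p : {A|p} → {B|q}`. -/
def twHom (D : DGData k) (T : TwistedData D) {A B : D.Obj} {a : ℤ}
    {q : D.Hom B B 1} (hq : D.MC q) (α : D.Hom A B a) {p : D.Hom A A 1}
    (hp : D.MC p) : D.Hom (T.obj A p hp) (T.obj B q hq) (0 + (a + 0)) :=
  D.comp (T.ιInv B q hq) (D.comp α (T.ι A p hp))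

/-- Objects of the completion by twisted complexes: pairs `{A|p}` with
`p : A → A` of degree `1` satisfying the Maurer-Cartan equation. -/
abbrev twObj (D : DGData k) : Type _ := (A : D.Obj) × {p : D.Hom A A 1 // D.MC p}

/-- The completion by twisted complexes `Twist(A)`: morphisms
`{A|p} → {B|q}` of degree `g` are morphisms `α : A → B` of degree `g`, written
`{q|α|p}`; composition and identities are those of `A`, and the differential is
`d({q|α|p}) = {q|(q∘α)|p} + {q|dα|p} + (-1)^{|α|+1} {q|(α∘p)|p}`. -/
@[reducible] def twData (D : DGData k) : DGData k where
  Obj := twObj D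
  Hom X Y g := D.Hom X.1 Y.1 g
  homAdd _ _ _ := inferInstance
  homMod _ _ _ := inferInstance
  d := fun {X Y g} α =>
    D.cast (by ring) (D.comp Y.2.1 α) + D.d α +
      ((-1 : k) ^ (g + 1)) • D.cast (by ring) (D.comp α X.2.1)
  comp := fun {X Y Z g h} β α => D.comp β α
  id X := D.id X.1

end P

namespace P

/-! Twisting by `α` on top of `p` is twisting by `p + α`. On endomorphisms of `{A|p}` the
differential of `Twist(A)` is `d + [p, -]`, so expanding `d(p + α) + (p + α)²` gives `d(p) + p²`,
which vanishes, plus the left-hand side of the Maurer-Cartan equation of `α` in `Twist(A)`. Since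
`d(id) = 0`, the differential of `{q|id|p}` is `q - p`, which is `-α` for `{p|id|p+α}`. -/

section Twist

variable {k : Type} [Field k] {D : DGData k}

lemma DGData.cast_cast {A B : D.Obj} {i j l : ℤ} (h : i = j) (h' : j = l) (x : D.Hom A B i) :
    D.cast h' (D.cast h x) = D.cast (h.trans h') x := by
  subst h h'; rfl

lemma DGData.cast_neg {A B : D.Obj} {i j : ℤ} (h : i = j) (x : D.Hom A B i) :
    D.cast h (-x) = -D.cast h x := by
  subst h; rfl

lemma DGData.cast_sub {A B : D.Obj} {i j : ℤ} (h : i = j) (x y : D.Hom A B i) :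
    D.cast h (x - y) = D.cast h x - D.cast h y := by
  subst h; rfl

lemma IsDGCat.cast_comp_id (hD : IsDGCat D) {A B : D.Obj} {g i : ℤ} (h : g + 0 = i)
    (α : D.Hom A B g) :
    D.cast h (D.comp α (D.id A)) = D.cast ((add_zero g).symm.trans h) α := by
  conv_rhs => rw [← hD.comp_id α, D.cast_cast]

lemma IsDGCat.cast_id_comp (hD : IsDGCat D) {A B : D.Obj} {g i : ℤ} (h : 0 + g = i)
    (α : D.Hom A B g) :
    D.cast h (D.comp (D.id B) α) = D.cast ((zero_add g).symm.trans h) α := by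
  conv_rhs => rw [← hD.id_comp α, D.cast_cast]

lemma IsDGCat.d_add_comp_self_add (hD : IsDGCat D) {A : D.Obj} (p α : D.Hom A A 1) :
    D.d (p + α) + D.comp (p + α) (p + α) =
      (D.d p + D.comp p p) + (D.comp p α + D.d α + D.comp α p + D.comp α α) := by
  rw [hD.d_add, hD.comp_add_left, hD.comp_add_right, hD.comp_add_right]
  abel

lemma twData_d_of_degree_one {X Y : twObj D} (α : D.Hom X.1 Y.1 1) :
    (twData D).d (A := X) (B := Y) α = D.comp Y.2.1 α + D.d α + D.comp α X.2.1 := by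
  have sign : (-1 : k) ^ ((1 : ℤ) + 1) = 1 := Even.neg_one_zpow ⟨1, rfl⟩
  change D.comp Y.2.1 α + D.d α + (-1 : k) ^ ((1 : ℤ) + 1) • D.comp α X.2.1 = _
  rw [sign, one_smul]

theorem twData_MC_iff_MC_add (hD : IsDGCat D) (X : twObj D) (α : D.Hom X.1 X.1 1) :
    (twData D).MC (A := X) α ↔ D.MC (X.2.1 + α) := by
  have hp : D.d X.2.1 + D.comp X.2.1 X.2.1 = 0 := X.2.2
  unfold DGData.MC
  rw [twData_d_of_degree_one, hD.d_add_comp_self_add, hp, zero_add]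

theorem twData_d_id (hD : IsDGCat D) {A : D.Obj} (p q : {p : D.Hom A A 1 // D.MC p}) :
    (twData D).d (A := ⟨A, p⟩) (B := ⟨A, q⟩) (D.id A) =
      D.cast (zero_add 1).symm (q.1 - p.1) := by
  have sign : (-1 : k) ^ ((0 : ℤ) + 1) = -1 := Odd.neg_one_zpow odd_one
  dsimp only
  rw [hD.cast_comp_id, hD.cast_id_comp, hD.d_id, sign, neg_one_smul, add_zero, D.cast_sub,
    sub_eq_add_neg]

theorem twData_d_id_add (hD : IsDGCat D) {A : D.Obj} {p α : D.Hom A A 1} (hp : D.MC p)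
    (hpα : D.MC (p + α)) :
    (twData D).d (A := ⟨A, p + α, hpα⟩) (B := ⟨A, p, hp⟩) (D.id A) =
      -D.cast (zero_add 1).symm α := by
  rw [twData_d_id hD, sub_add_cancel_left, D.cast_neg]

/-- The twisted complex of `({A|p}, {p|α|p})` in `Twist(A)`: the object `{A|p+α}`, with
`ι = {p|id_A|p+α}` and inverse `{p+α|id_A|p}`. -/
def twTwistedData (hD : IsDGCat D) : TwistedData (twData D) where
  obj X α hα := ⟨X.1, X.2.1 + α, (twData_MC_iff_MC_add hD X α).1 hα⟩
  ι X _ _ := D.id X.1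
  ιInv X _ _ := D.id X.1

theorem isTwistedData_twTwistedData (hD : IsDGCat D) :
    IsTwistedData (twData D) (twTwistedData hD) where
  ι_ιInv X _ _ := hD.id_comp (D.id X.1)
  ιInv_ι X _ _ := hD.id_comp (D.id X.1)
  dι X α hα := by
    change (twData D).d (A := ⟨X.1, X.2.1 + α, _⟩) (B := X) (D.id X.1) +
      D.cast (add_comm 1 0) (D.comp α (D.id X.1)) = 0
    rw [twData_d_id_add hD X.2.2, hD.cast_comp_id, neg_add_cancel]

/-- `Twist(A)` has twisted complexes, with `{{A|p}|α} = {A|p+α}`. -/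
def twHasTwistedComplexes (hD : IsDGCat D) : HasTwistedComplexes (twData D) where
  T := twTwistedData hD
  isT := isTwistedData_twTwistedData hD

end Twist

/-- **Statement 8.** Let `A` be a dg category.  Then `Twist(A)` has twisted
complexes: given an object `{A|p}` of `Twist(A)` and a degree-1 endomorphism
`{p|α|p}` of `{A|p}` satisfying the Maurer-Cartan equation in `Twist(A)`, the
endomorphism `p + α` of `A` satisfies the Maurer-Cartan equation in `A`, and
the object `{A|p+α}` together with the degree-0 isomorphism
`{p|id_A|p+α} : {A|p+α} → {A|p}` is a twisted complex of `({A|p}, {p|α|p})` in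
`Twist(A)`; in particular
`d({p|id_A|p+α}) = -{p|α|p+α} = (-{p|α|p}) ∘ {p|id_A|p+α}`. -/
theorem statement_8 {k : Type} [Field k] (D : DGData k) (hD : IsDGCat D)
    (A : D.Obj) (p : D.Hom A A 1) (hp : D.MC p) (α : D.Hom A A 1)
    (hα : (twData D).MC (A := ⟨A, ⟨p, hp⟩⟩) α) :
    -- `p + α` satisfies the Maurer-Cartan equation in `A`
    D.MC (p + α) ∧
    ∀ hpa : D.MC (p + α),
      -- `{p|id_A|p+α}` is a degree-0 isomorphism `{A|p+α} → {A|p}` in `Twist(A)`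
      ((twData D).cast (by norm_num)
          ((twData D).comp (A := ⟨A, ⟨p + α, hpa⟩⟩) (B := ⟨A, ⟨p, hp⟩⟩)
            (C := ⟨A, ⟨p + α, hpa⟩⟩) (i := 0) (j := 0) (D.id A) (D.id A)) =
        (twData D).id ⟨A, ⟨p + α, hpa⟩⟩) ∧
      ((twData D).cast (by norm_num)
          ((twData D).comp (A := ⟨A, ⟨p, hp⟩⟩) (B := ⟨A, ⟨p + α, hpa⟩⟩)
            (C := ⟨A, ⟨p, hp⟩⟩) (i := 0) (j := 0) (D.id A) (D.id A)) =
        (twData D).id ⟨A, ⟨p, hp⟩⟩) ∧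
      -- the defining equation of a twisted complex: `d(ι) + {p|α|p} ∘ ι = 0`
      ((twData D).d (A := ⟨A, ⟨p + α, hpa⟩⟩) (B := ⟨A, ⟨p, hp⟩⟩) (i := 0) (D.id A) +
        (twData D).cast (by norm_num)
          ((twData D).comp (A := ⟨A, ⟨p + α, hpa⟩⟩) (B := ⟨A, ⟨p, hp⟩⟩)
            (C := ⟨A, ⟨p, hp⟩⟩) (i := 0) (j := 1) α (D.id A)) = 0) ∧
      -- in particular `d({p|id_A|p+α}) = -{p|α|p+α}`
      ((twData D).d (A := ⟨A, ⟨p + α, hpa⟩⟩) (B := ⟨A, ⟨p, hp⟩⟩) (i := 0) (D.id A) =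
        - (twData D).cast (A := ⟨A, ⟨p + α, hpa⟩⟩) (B := ⟨A, ⟨p, hp⟩⟩)
            (by norm_num : (1:ℤ) = 0 + 1) α) ∧
      -- and `d({p|id_A|p+α}) = (-{p|α|p}) ∘ {p|id_A|p+α}`
      ((twData D).d (A := ⟨A, ⟨p + α, hpa⟩⟩) (B := ⟨A, ⟨p, hp⟩⟩) (i := 0) (D.id A) =
        (twData D).cast (by norm_num)
          ((twData D).comp (A := ⟨A, ⟨p + α, hpa⟩⟩) (B := ⟨A, ⟨p, hp⟩⟩)
            (C := ⟨A, ⟨p, hp⟩⟩) (i := 0) (j := 1) (- α) (D.id A))) := by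
  have hT := (twHasTwistedComplexes hD).isT
  have hdι := fun hpα => twData_d_id_add hD hp (α := α) hpα
  refine ⟨(twData_MC_iff_MC_add hD ⟨A, p, hp⟩ α).1 hα, fun hpα => ⟨hT.ιInv_ι ⟨A, p, hp⟩ α hα,
    hT.ι_ιInv ⟨A, p, hp⟩ α hα, hT.dι ⟨A, p, hp⟩ α hα, hdι hpα, ?_⟩⟩
  rw [hdι hpα, ← D.cast_neg]
  exact (hD.cast_comp_id (add_comm 1 0) (-α)).symm

end P
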